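/- Let 0 < ε < π/6. If a metric space (X,d) is semi-globally ATB(ε), then every bounded self-contracted curve in X is rectifiable. -/

import Mathlib

/-- A curve `γ` defined on `I ⊆ ℝ` is self-contracted. -/
def SelfContracted {X : Type*} [MetricSpace X] (γ : ℝ → X) (I : Set ℝ) : Prop :=
  ∀ t₁ ∈ I, ∀ t₂ ∈ I, ∀ t₃ ∈ I, t₁ ≤ t₂ → t₂ ≤ t₃ →
    dist (γ t₂) (γ t₃) ≤ dist (γ t₁) (γ t₃)

/-- A curve is rectifiable if the sums of consecutive distances along increasing
finite sequences of parameters are uniformly bounded. -/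
def Rectifiable {X : Type*} [MetricSpace X] (γ : ℝ → X) (I : Set ℝ) : Prop :=
  ∃ M : ℝ, ∀ (k : ℕ) (t : Fin (k + 1) → ℝ), (∀ i, t i ∈ I) → StrictMono t →
    ∑ i : Fin k, dist (γ (t i.castSucc)) (γ (t i.succ)) ≤ M

/-- The Euclidean comparison angle `∠̃ x p y`. -/
noncomputable def compAngle {X : Type*} [MetricSpace X] (p x y : X) : ℝ :=
  Real.arccos ((dist x p ^ 2 + dist y p ^ 2 - dist x y ^ 2) / (2 * dist x p * dist y p))

/-- The point `p` satisfies the `ATB(ε)` condition with constants `L` and `R`. -/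
def ATBPoint {X : Type*} [MetricSpace X] (ε : ℝ) (p : X) (L : ℕ) (R : ℝ) : Prop :=
  ∀ y : Fin L → X, (∀ i, y i ∈ Metric.ball p R ∧ y i ≠ p) →
    ∃ i j, i ≠ j ∧ compAngle p (y i) (y j) < ε

/-- `X` is semi-globally `ATB(ε)`: for every `x` and `R > 0` there is `L` such that
every `p ∈ B_R(x)` satisfies `ATB(ε)` with constants `L` and `R`. -/
def SemiGlobalATB (X : Type*) [MetricSpace X] (ε : ℝ) : Prop :=
  ∀ (x : X) (R : ℝ), 0 < R → ∃ L : ℕ, ∀ p ∈ Metric.ball x R, ATBPoint ε p L R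

/-!
The proof bounds the length of every finite self-contracted chain in a set with a uniform angle
condition by a constant multiple of the distance between its endpoints.

Since `2 * sin (ε / 2) < 1` for `ε < π / 3`, points at nearly the same distance `σ` from `p` and
seen from `p` under an angle smaller than `ε` are closer to each other than a fixed fraction of `σ`;
by pigeonhole, a ball contains boundedly many separated points. The example of an infinite set with
all distances equal to `1` shows that nothing of the sort holds beyond `π / 3`.

A chain much longer than its chord must contain a large step `x u → x v` that is preceded by a small
piece, itself much longer than its chord, and is nearly transversal to the directions of any
prescribed finite set of later points: otherwise every such step would make the sum of the distances
to these points drop. Seen from the small piece, `x v` then spans a large angle with each of the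
prescribed points. Iterating inside the small pieces yields `L` points seen under pairwise angles at
least `π / 3` from one point of the chain, against the angle condition.
-/

theorem exists_first_mem_Icc {P : ℕ → Prop} {a b : ℕ} (hab : a ≤ b) (hb : P b) :
    ∃ y ∈ Set.Icc a b, P y ∧ ∀ i ∈ Set.Ico a y, ¬ P i := by
  classical
  have hex : ∃ y, a ≤ y ∧ P y := ⟨b, hab, hb⟩
  obtain ⟨hay, hPy⟩ := Nat.find_spec hex
  exact ⟨Nat.find hex, ⟨hay, Nat.find_min' hex ⟨hab, hb⟩⟩, hPy,
    fun i hi hPi => Nat.find_min hex hi.2 ⟨hi.1, hPi⟩⟩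

theorem exists_last_mem_Ico {P : ℕ → Prop} {a b : ℕ} (h : ∃ u ∈ Set.Ico a b, P u) :
    ∃ u ∈ Set.Ico a b, P u ∧ ∀ i ∈ Set.Ico (u + 1) b, ¬ P i := by
  classical
  obtain ⟨w, hw, hPw⟩ := h
  obtain ⟨hu, hPu⟩ := Nat.findGreatest_spec (P := fun u => u ∈ Set.Ico a b ∧ P u) hw.2.le ⟨hw, hPw⟩
  exact ⟨_, hu, hPu, fun i hi hPi => Nat.findGreatest_is_greatest hi.1 hi.2.le
    ⟨⟨hu.1.trans (Nat.le_of_succ_le hi.1), hi.2⟩, hPi⟩⟩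

section Packing

variable {X : Type*} [PseudoMetricSpace X] {S S' : Set X} {r r' : ℝ} {M M' : ℕ}

/-- A scale-invariant packing bound: a closed ball of radius `σ` around a point of `S` contains at
most `M` points of `S` at pairwise distances larger than `r * σ`. -/
def IsPackingBound (S : Set X) (r : ℝ) (M : ℕ) : Prop :=
  ∀ p ∈ S, ∀ σ > 0, ∀ T : Finset X, (T : Set X) ⊆ S ∩ Metric.closedBall p σ →
    (T : Set X).Pairwise (fun z w => r * σ < dist z w) → T.card ≤ M

theorem IsPackingBound.mono (h : IsPackingBound S r M) (hS : S' ⊆ S) (hr : r ≤ r') :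
    IsPackingBound S' r' M := fun p hp σ hσ T hT hsep =>
  h p (hS hp) σ hσ T (hT.trans (Set.inter_subset_inter_left _ hS))
    (hsep.mono' fun _ _ hzw => (mul_le_mul_of_nonneg_right hr hσ.le).trans_lt hzw)

theorem exists_separated_net {s : ℝ} (hs : 0 ≤ s) (T : Finset X) :
    ∃ Y ⊆ T, (Y : Set X).Pairwise (fun z w => s < dist z w) ∧ ∀ z ∈ T, ∃ y ∈ Y, dist z y ≤ s := by
  classical
  let separated := T.powerset.filter fun Y : Finset X =>
    (Y : Set X).Pairwise (fun z w => s < dist z w)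
  obtain ⟨Y, hY⟩ := separated.exists_maximal
    ⟨∅, by simp only [separated, Finset.mem_filter, Finset.empty_mem_powerset, Finset.coe_empty,
      Set.pairwise_empty, and_self]⟩
  obtain ⟨hYT, hYsep⟩ := Finset.mem_filter.1 hY.prop
  rw [Finset.mem_powerset] at hYT
  refine ⟨Y, hYT, hYsep, fun z hz => ?_⟩
  by_contra! hfar
  have hins : insert z Y ∈ separated := by
    refine Finset.mem_filter.2
      ⟨Finset.mem_powerset.2 (Finset.insert_subset hz hYT), ?_⟩
    rw [Finset.coe_insert]
    exact hYsep.insert fun y hy _ => ⟨hfar y hy, by rw [dist_comm]; exact hfar y hy⟩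
  have hzY : z ∈ Y := hY.le_of_ge hins (Finset.subset_insert z Y) (Finset.mem_insert_self z Y)
  exact (hfar z hzY).not_ge (by rwa [dist_self])

theorem IsPackingBound.mul (h : IsPackingBound S r M) (h' : IsPackingBound S r' M') (hr : 0 < r) :
    IsPackingBound S (r * r') (M * M') := by
  classical
  intro p hp σ hσ T hT hsep
  have hrσ : 0 < r * σ := mul_pos hr hσ
  obtain ⟨Y, hYT, hYsep, hYnet⟩ := exists_separated_net hrσ.le T
  have hcover : T ⊆ Y.biUnion fun y => T.filter fun z => dist z y ≤ r * σ := fun z hz => by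
    obtain ⟨y, hy, hzy⟩ := hYnet z hz
    exact Finset.mem_biUnion.2 ⟨y, hy, Finset.mem_filter.2 ⟨hz, hzy⟩⟩
  have hpiece : ∀ y ∈ Y, (T.filter fun z => dist z y ≤ r * σ).card ≤ M' := fun y hy => by
    refine h' y (hT (hYT hy)).1 (r * σ) hrσ _ (fun z hz => ?_) ?_
    · obtain ⟨hzT, hzy⟩ := Finset.mem_filter.1 hz
      exact ⟨(hT hzT).1, hzy⟩
    · refine (hsep.mono (Finset.coe_subset.2 (Finset.filter_subset _ T))).mono' fun z w hzw => ?_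
      rwa [← mul_assoc, mul_comm r' r]
  calc T.card ≤ _ := Finset.card_le_card hcover
    _ ≤ Y.card * M' := Finset.card_biUnion_le_card_mul _ _ _ hpiece
    _ ≤ M * M' := Nat.mul_le_mul_right _
      (h p hp σ hσ Y ((Finset.coe_subset.2 hYT).trans hT) hYsep)

theorem IsPackingBound.pow_succ (h : IsPackingBound S r M) (hr : 0 < r) (n : ℕ) :
    IsPackingBound S (r ^ (n + 1)) (M ^ (n + 1)) := by
  induction n with
  | zero => simpa only [zero_add, pow_one] using h
  | succ n ih =>
    rw [_root_.pow_succ r, _root_.pow_succ M]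
    exact ih.mul h (pow_pos hr _)

theorem IsPackingBound.exists_of_lt_one (h : IsPackingBound S r M) (hr : 0 < r) (hr1 : r < 1)
    {δ : ℝ} (hδ : 0 < δ) : ∃ N, IsPackingBound S δ N := by
  obtain ⟨n, hn⟩ := exists_pow_lt_of_lt_one hδ hr1
  exact ⟨_, (h.pow_succ hr n).mono subset_rfl
    ((pow_le_pow_of_le_one hr.le hr1.le n.le_succ).trans hn.le)⟩

theorem IsPackingBound.card_le {ι : Type*} (h : IsPackingBound S r M) (hr : 0 ≤ r) {p : X}
    (hp : p ∈ S) {σ : ℝ} (hσ : 0 < σ) {x : ι → X} {T : Finset ι}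
    (hT : ∀ i ∈ T, x i ∈ S ∩ Metric.closedBall p σ)
    (hsep : (T : Set ι).Pairwise (fun i j => r * σ < dist (x i) (x j))) : T.card ≤ M := by
  classical
  have hinj : Set.InjOn x T := fun i hi j hj hij => by
    by_contra hne
    have hij_sep : r * σ < dist (x i) (x j) := hsep hi hj hne
    rw [hij, dist_self] at hij_sep
    exact hij_sep.not_ge (mul_nonneg hr hσ.le)
  rw [← Finset.card_image_of_injOn hinj]
  refine h p hp σ hσ _ ?_ ?_
  · rw [Finset.coe_image]
    rintro _ ⟨i, hi, rfl⟩
    exact hT i hi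
  · rw [Finset.coe_image]
    exact hinj.pairwise_image.2 hsep

end Packing

section Angle

variable {X : Type*} [MetricSpace X] {ε : ℝ} {L : ℕ} {S : Set X} {p z w : X}

theorem compAngle_comm (p z w : X) : compAngle p z w = compAngle p w z := by
  unfold compAngle
  rw [dist_comm z w, add_comm, mul_right_comm]

theorem arccos_lt_iff {q α : ℝ} (hα0 : 0 < α) (hα : α ≤ Real.pi) :
    Real.arccos q < α ↔ Real.cos α < q := by
  constructor
  · intro h
    by_contra! hq
    exact h.not_ge (by simpa only [Real.arccos_cos hα0.le hα] using Real.arccos_le_arccos hq)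
  · intro h
    rcases le_or_gt q 1 with hq | hq
    · simpa only [Real.arccos_cos hα0.le hα] using
        Real.arccos_lt_arccos (Real.neg_one_le_cos α) h hq
    · rwa [Real.arccos_of_one_le hq.le]

theorem compAngle_lt_iff {α : ℝ} (hα0 : 0 < α) (hα : α ≤ Real.pi) (hz : 0 < dist z p)
    (hw : 0 < dist w p) :
    compAngle p z w < α ↔
      dist z w ^ 2 < dist z p ^ 2 + dist w p ^ 2 - 2 * Real.cos α * (dist z p * dist w p) := by
  rw [compAngle, arccos_lt_iff hα0 hα, lt_div_iff₀ (by positivity), lt_sub_comm]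
  ring_nf

/-- The `ATB(ε)` condition with a uniform `L` at all points of `S`, tested on points of `S` only. -/
def IsATBOn (ε : ℝ) (L : ℕ) (S : Set X) : Prop :=
  ∀ p ∈ S, ∀ y : Fin L → X, (∀ i, y i ∈ S ∧ y i ≠ p) →
    ∃ i j, i ≠ j ∧ compAngle p (y i) (y j) < ε

theorem IsATBOn.mono {ε' : ℝ} (h : IsATBOn ε L S) (hε : ε ≤ ε') : IsATBOn ε' L S :=
  fun p hp y hy =>
    let ⟨i, j, hij, hangle⟩ := h p hp y hy
    ⟨i, j, hij, hangle.trans_le hε⟩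

theorem SemiGlobalATB.exists_isATBOn (h : SemiGlobalATB X ε) (hS : Bornology.IsBounded S) :
    ∃ L, IsATBOn ε L S := by
  rcases S.eq_empty_or_nonempty with rfl | ⟨x, hx⟩
  · exact ⟨0, fun p hp => absurd hp (Set.notMem_empty p)⟩
  have hball : ∀ {p q}, p ∈ S → q ∈ S → q ∈ Metric.ball p (Metric.diam S + 1) :=
    fun hp hq => (Metric.dist_le_diam_of_mem hS hq hp).trans_lt (lt_add_one _)
  obtain ⟨L, hL⟩ := h x (Metric.diam S + 1) (by positivity)
  exact ⟨L, fun p hp y hy =>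
    hL p (hball hx hp) y fun i => ⟨hball hp (hy i).1, (hy i).2⟩⟩

theorem IsATBOn.exists_compAngle_lt (h : IsATBOn ε L S) (hp : p ∈ S) {ι : Type*} {F : Finset ι}
    {y : ι → X} (hy : ∀ i ∈ F, y i ∈ S ∧ y i ≠ p) (hF : L ≤ F.card) :
    ∃ i ∈ F, ∃ j ∈ F, i ≠ j ∧ compAngle p (y i) (y j) < ε := by
  obtain ⟨U, hUF, hU⟩ := Finset.exists_subset_card_eq hF
  let e := (U.equivFinOfCardEq hU).symm
  obtain ⟨i, j, hij, hangle⟩ := h p hp (fun i => y (e i)) fun i => hy _ (hUF (e i).2)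
  exact ⟨e i, hUF (e i).2, e j, hUF (e j).2, fun he => hij (e.injective (Subtype.ext he)), hangle⟩

theorem dist_lt_of_compAngle_lt {η r σ : ℝ} (hε : ε ≤ Real.pi) (hr0 : 0 ≤ r)
    (hr : η ^ 2 + 2 * (1 - Real.cos ε) ≤ r ^ 2) (hz : z ≠ p) (hw : w ≠ p)
    (hzσ : dist z p ≤ σ) (hwσ : dist w p ≤ σ) (hshell : |dist z p - dist w p| ≤ η * σ)
    (hangle : compAngle p z w < ε) : dist z w < r * σ := by
  have hε0 : 0 < ε := (Real.arccos_nonneg _).trans_lt hangle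
  have hlaw := (compAngle_lt_iff hε0 hε (dist_pos.2 hz) (dist_pos.2 hw)).1 hangle
  have hσ : 0 ≤ σ := dist_nonneg.trans hzσ
  refine lt_of_pow_lt_pow_left₀ 2 (by positivity) ?_
  calc dist z w ^ 2
      < (dist z p - dist w p) ^ 2 + 2 * (1 - Real.cos ε) * (dist z p * dist w p) := by linarith
    _ ≤ (η * σ) ^ 2 + 2 * (1 - Real.cos ε) * (σ * σ) :=
        add_le_add (sq_le_sq' (abs_le.1 hshell).1 (abs_le.1 hshell).2)
          (mul_le_mul_of_nonneg_left (mul_le_mul hzσ hwσ dist_nonneg hσ)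
            (by linarith [Real.cos_le_one ε]))
    _ = (η ^ 2 + 2 * (1 - Real.cos ε)) * σ ^ 2 := by ring
    _ ≤ r ^ 2 * σ ^ 2 := mul_le_mul_of_nonneg_right hr (sq_nonneg σ)
    _ = (r * σ) ^ 2 := by ring

theorem IsATBOn.isPackingBound (h : IsATBOn ε L S) (hε : ε ≤ Real.pi) {r : ℝ} (hr0 : 0 ≤ r) {n : ℕ}
    (hr : (1 / (n + 1 : ℝ)) ^ 2 + 2 * (1 - Real.cos ε) ≤ r ^ 2) :
    IsPackingBound S r ((n + 2) * L + 1) := by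
  classical
  intro p hp σ hσ T hT hsep
  by_contra! hcard
  let shell : X → ℤ := fun z => ⌊(n + 1) * dist z p / σ⌋
  have hmaps : ∀ z ∈ T.erase p, shell z ∈ Finset.Icc (0 : ℤ) (n + 1) := fun z hz => by
    have hzσ : dist z p ≤ σ := (hT (Finset.mem_of_mem_erase hz)).2
    have hle : (n + 1) * dist z p / σ ≤ (n + 1 : ℤ) := by
      rw [div_le_iff₀ hσ]
      push_cast
      gcongr
    exact Finset.mem_Icc.2 ⟨Int.floor_nonneg.2 (by positivity),
      Int.floor_le_iff.2 (hle.trans_lt (lt_add_one _))⟩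
  have hpigeons : (Finset.Icc (0 : ℤ) (n + 1)).card * L < (T.erase p).card := by
    have herase := Finset.pred_card_le_card_erase (s := T) (a := p)
    have hIcc : (Finset.Icc (0 : ℤ) (n + 1)).card = n + 2 := by
      rw [Int.card_Icc]
      omega
    rw [hIcc]
    omega
  obtain ⟨m, -, hm⟩ := Finset.exists_lt_card_fiber_of_mul_lt_card_of_maps_to hmaps hpigeons
  have hfiber : ∀ z ∈ (T.erase p).filter (shell · = m), z ≠ p ∧ z ∈ T ∧ shell z = m := by
    simp only [Finset.mem_filter, Finset.mem_erase, and_assoc, imp_self, implies_true]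
  obtain ⟨z, hz, w, hw, hzw, hangle⟩ := h.exists_compAngle_lt hp (y := id)
    (fun z hz => ⟨(hT (hfiber z hz).2.1).1, (hfiber z hz).1⟩) hm.le
  obtain ⟨hzp, hzT, hzm⟩ := hfiber z hz
  obtain ⟨hwp, hwT, hwm⟩ := hfiber w hw
  have hshell : |dist z p - dist w p| ≤ 1 / (n + 1) * σ := by
    have hfloor := (Int.abs_sub_lt_one_of_floor_eq_floor (hzm.trans hwm.symm)).le
    rw [← sub_div, ← mul_sub, abs_div, abs_mul, abs_of_pos hσ,
      abs_of_pos (by positivity : (0 : ℝ) < n + 1), div_le_one hσ] at hfloor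
    rwa [one_div, ← div_eq_inv_mul, le_div_iff₀' (by positivity)]
  exact (hsep hzT hwT hzw).not_gt
    (dist_lt_of_compAngle_lt hε hr0 hr hzp hwp (hT hzT).2 (hT hwT).2 hshell hangle)

theorem IsATBOn.exists_isPackingBound (h : IsATBOn ε L S) (hε : ε < Real.pi / 3) {δ : ℝ}
    (hδ : 0 < δ) : ∃ M, IsPackingBound S δ M := by
  have hε₀ : max ε 0 < Real.pi / 3 := max_lt hε (by positivity)
  have hε_pi : max ε 0 ≤ Real.pi := by linarith [Real.pi_pos]
  have hcos : 1 / 2 < Real.cos (max ε 0) := by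
    rw [← Real.cos_pi_div_three]
    exact Real.cos_lt_cos_of_nonneg_of_le_pi (le_max_right ε 0) (by linarith [Real.pi_pos]) hε₀
  obtain ⟨n, hn⟩ := exists_nat_one_div_lt
    (show 0 < 1 - 2 * (1 - Real.cos (max ε 0)) by linarith)
  have hn0 : 0 < 1 / (n + 1 : ℝ) := by positivity
  set q : ℝ := (1 / (n + 1 : ℝ)) ^ 2 + 2 * (1 - Real.cos (max ε 0))
  have hq0 : 0 < q := add_pos_of_pos_of_nonneg (by positivity)
    (by linarith [Real.cos_le_one (max ε 0)])
  have hq1 : q < 1 := by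
    have hsq : (1 / (n + 1 : ℝ)) ^ 2 ≤ 1 / (n + 1 : ℝ) :=
      pow_le_of_le_one hn0.le (by linarith [Real.cos_le_one (max ε 0)]) two_ne_zero
    linarith
  exact ((h.mono (le_max_left ε 0)).isPackingBound hε_pi (Real.sqrt_nonneg q)
    (Real.sq_sqrt hq0.le).ge).exists_of_lt_one (Real.sqrt_pos.2 hq0)
    ((Real.sqrt_lt' one_pos).2 (by rwa [one_pow])) hδ

end Angle

section SelfContracted

/-- Self-contractedness of a map defined on a whole preorder; used for finite chains of points of a
curve, which are encoded as (eventually constant) sequences. -/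
def IsSelfContracted {ι X : Type*} [Preorder ι] [PseudoMetricSpace X] (x : ι → X) : Prop :=
  ∀ ⦃i j k⦄, i ≤ j → j ≤ k → dist (x j) (x k) ≤ dist (x i) (x k)

theorem SelfContracted.comp_monotone {ι X : Type*} [Preorder ι] [MetricSpace X] {γ : ℝ → X}
    {I : Set ℝ} (h : SelfContracted γ I) {t : ι → ℝ} (ht : Monotone t) (htI : ∀ i, t i ∈ I) :
    IsSelfContracted (γ ∘ t) := fun _ _ _ hij hjk =>
  h _ (htI _) _ (htI _) _ (htI _) (ht hij) (ht hjk)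

theorem IsSelfContracted.dist_le_two_mul {ι X : Type*} [Preorder ι] [PseudoMetricSpace X]
    {x : ι → X} (hx : IsSelfContracted x) {e i j v : ι} (hi : i ∈ Set.Icc e v)
    (hj : j ∈ Set.Icc e v) : dist (x i) (x j) ≤ 2 * dist (x e) (x v) := by
  linarith [hx hi.1 hi.2, hx hj.1 hj.2, dist_triangle_right (x i) (x j) (x v)]

variable {X : Type*} [PseudoMetricSpace X] {x : ℕ → X}

/-- The length of the chain `x a, x (a + 1), …, x b`. -/
noncomputable def pathLength (x : ℕ → X) (a b : ℕ) : ℝ :=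
  ∑ i ∈ Finset.Ico a b, dist (x i) (x (i + 1))

theorem pathLength_add (x : ℕ → X) {a b c : ℕ} (hab : a ≤ b) (hbc : b ≤ c) :
    pathLength x a b + pathLength x b c = pathLength x a c :=
  Finset.sum_Ico_consecutive _ hab hbc

theorem pathLength_self (x : ℕ → X) (a : ℕ) : pathLength x a a = 0 := by
  simp only [pathLength, Finset.Ico_self, Finset.sum_empty]

theorem pathLength_succ (x : ℕ → X) {a b : ℕ} (hab : a ≤ b) :
    pathLength x a (b + 1) = pathLength x a b + dist (x b) (x (b + 1)) :=
  Finset.sum_Ico_succ_top hab _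

theorem pathLength_eq_dist_add (x : ℕ → X) {a b : ℕ} (hab : a < b) :
    pathLength x a b = dist (x a) (x (a + 1)) + pathLength x (a + 1) b :=
  Finset.sum_eq_sum_Ico_succ_bot hab _

theorem IsSelfContracted.pathLength_eq_zero (hx : IsSelfContracted x) {a b : ℕ}
    (h : dist (x a) (x b) = 0) : pathLength x a b = 0 := by
  refine Finset.sum_eq_zero fun i hi => le_antisymm ?_ dist_nonneg
  obtain ⟨hai, hib⟩ := Finset.mem_Ico.1 hi
  simpa only [h, mul_zero] using
    hx.dist_le_two_mul ⟨hai, hib.le⟩ ⟨hai.trans i.le_succ, Nat.succ_le_of_lt hib⟩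

theorem exists_separated_pathLength_le (x : ℕ → X) {ρ B τ : ℝ} (hρ : 0 ≤ ρ) {a b : ℕ} (hab : a ≤ b)
    (hstep : ∀ i ∈ Set.Ico a b, dist (x i) (x (i + 1)) ≤ τ)
    (hshort : ∀ t i, a ≤ t → t ≤ i → i < b → dist (x t) (x i) ≤ ρ → pathLength x t i ≤ B) :
    ∃ T ⊆ Finset.Ico a b, (T : Set ℕ).Pairwise (fun i j => ρ < dist (x i) (x j)) ∧
      pathLength x a b ≤ T.card * (B + τ) := by
  induction b using Nat.strong_induction_on with
  | _ b ih =>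
    rcases hab.eq_or_lt with rfl | hlt
    · exact ⟨∅, Finset.empty_subset _, by simp only [Finset.coe_empty, Set.pairwise_empty],
        by simp only [pathLength_self, Finset.card_empty, Nat.cast_zero, zero_mul, le_refl]⟩
    obtain ⟨f, rfl⟩ := Nat.exists_eq_succ_of_ne_zero (Nat.ne_zero_of_lt hlt)
    have haf : a ≤ f := Nat.lt_succ_iff.1 hlt
    obtain ⟨t, ⟨hat, htf⟩, hnear, hfar⟩ := exists_first_mem_Icc (P := fun t => dist (x t) (x f) ≤ ρ)
      haf (by rwa [dist_self])
    obtain ⟨T, hT, hTsep, hTlen⟩ := ih t (Nat.lt_succ_of_le htf) hat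
      (fun i hi => hstep i ⟨hi.1, by have := hi.2; omega⟩)
      (fun s i hs hsi hi => hshort s i hs hsi (by omega))
    have hTfar : ∀ i ∈ T, ρ < dist (x i) (x f) := fun i hi =>
      not_le.1 (hfar i (Finset.mem_Ico.1 (hT hi)))
    have hfT : f ∉ T := fun hf => (Finset.mem_Ico.1 (hT hf)).2.not_ge htf
    refine ⟨insert f T, Finset.insert_subset (Finset.mem_Ico.2 ⟨haf, f.lt_succ_self⟩)
      (hT.trans (Finset.Ico_subset_Ico_right (htf.trans f.le_succ))), ?_, ?_⟩
    · rw [Finset.coe_insert]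
      exact hTsep.insert fun i hi _ => ⟨by rw [dist_comm]; exact hTfar i hi, hTfar i hi⟩
    · rw [Finset.card_insert_of_notMem hfT, pathLength_succ x haf, ← pathLength_add x hat htf]
      push_cast
      linarith [hshort t f hat htf f.lt_succ_self hnear, hstep f ⟨haf, f.lt_succ_self⟩]

theorem rectifiable_of_pathLength_le {X : Type*} [MetricSpace X] {γ : ℝ → X} {I : Set ℝ} {C : ℝ}
    (h : ∀ (t : ℕ → ℝ) (k : ℕ), Monotone t → (∀ i, t i ∈ I) → pathLength (γ ∘ t) 0 k ≤ C) :
    Rectifiable γ I := by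
  refine ⟨C, fun k t htI ht => ?_⟩
  let s : ℕ → ℝ := fun i => t (Fin.clamp i k)
  have hs : ∀ i : Fin (k + 1), s i = t i := fun i =>
    congrArg t (Fin.ext (min_eq_left i.is_le))
  calc ∑ i : Fin k, dist (γ (t i.castSucc)) (γ (t i.succ))
      = ∑ i : Fin k, dist ((γ ∘ s) i) ((γ ∘ s) (i + 1)) :=
        Finset.sum_congr rfl fun i _ => by
          simp only [Function.comp_apply, ← hs, Fin.val_castSucc, Fin.val_succ]
    _ = pathLength (γ ∘ s) 0 k := by
        rw [pathLength, ← Finset.range_eq_Ico,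
          Fin.sum_univ_eq_sum_range fun i => dist ((γ ∘ s) i) ((γ ∘ s) (i + 1))]
    _ ≤ C := h s k (ht.monotone.comp Fin.clamp_monotone) fun i => htI _

end SelfContracted

section LongTail

variable {X : Type*} [PseudoMetricSpace X] {x : ℕ → X} {K : ℝ} {M : ℕ}

/-- The step `x u → x v` is preceded by a piece `x t, …, x u` with `a ≤ t` that is small compared
with the step but more than `K` times longer than its own chord. -/
def HasLongTail (x : ℕ → X) (K : ℝ) (a u v : ℕ) : Prop :=
  ∃ t, a ≤ t ∧ t ≤ u ∧ dist (x t) (x u) ≤ dist (x u) (x v) / 10 ∧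
    K * dist (x t) (x u) < pathLength x t u

theorem HasLongTail.anti {a a' u v : ℕ} (h : HasLongTail x K a u v) (ha : a' ≤ a) :
    HasLongTail x K a' u v :=
  let ⟨t, hat, htail⟩ := h
  ⟨t, ha.trans hat, htail⟩

theorem pathLength_le_on_shell (hx : IsSelfContracted x)
    (hM : IsPackingBound (Set.range x) (1 / 20) M) (hK : 0 ≤ K) {e y v : ℕ} (hey : e ≤ y)
    (hyv : y ≤ v) (htail : ∀ u ∈ Set.Ico e v, ¬ HasLongTail x K e u v)
    (hshell : ∀ i ∈ Set.Ico e y, dist (x e) (x v) / 2 < dist (x i) (x v)) :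
    pathLength x e y ≤ M * (K + 2) * dist (x e) (x v) := by
  set σ := dist (x e) (x v)
  have hσ : 0 ≤ σ := dist_nonneg
  -- On the shell `dist (x i) (x v) > σ / 2`, so a chord of at most `σ / 20` is at most a tenth of
  -- the step from `x i` to `x v`.
  obtain ⟨T, hT, hTsep, hTlen⟩ := exists_separated_pathLength_le x (ρ := 1 / 20 * σ) (B := K * σ)
    (τ := 2 * σ) (by positivity) hey
    (fun i hi => hx.dist_le_two_mul ⟨hi.1, hi.2.le.trans hyv⟩
      ⟨hi.1.trans i.le_succ, (Nat.succ_le_of_lt hi.2).trans hyv⟩)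
    (fun t i het hti hiy hchord => by
      by_contra! hlong
      refine htail i ⟨het.trans hti, hiy.trans_le hyv⟩ ⟨t, het, hti, ?_, ?_⟩
      · linarith [hshell i ⟨het.trans hti, hiy⟩]
      · exact (mul_le_mul_of_nonneg_left (by linarith) hK).trans_lt hlong)
  have hcard : T.card ≤ M := by
    rcases hey.eq_or_lt with rfl | hlt
    · simp only [Finset.Ico_self, Finset.subset_empty] at hT
      simp only [hT, Finset.card_empty, zero_le]
    have hσ_pos : 0 < σ := by linarith [hshell e ⟨le_rfl, hlt⟩]
    refine hM.card_le (by norm_num) (Set.mem_range_self v) hσ_pos (fun i hi => ?_) hTsep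
    obtain ⟨hei, hiy⟩ := Finset.mem_Ico.1 (hT hi)
    exact ⟨Set.mem_range_self i, hx hei (hiy.le.trans hyv)⟩
  calc pathLength x e y ≤ T.card * (K * σ + 2 * σ) := hTlen
    _ ≤ M * (K * σ + 2 * σ) := by gcongr
    _ = M * (K + 2) * σ := by ring

theorem pathLength_le_of_forall_not_hasLongTail (hx : IsSelfContracted x)
    (hM : IsPackingBound (Set.range x) (1 / 20) M) (hK : 0 ≤ K) {e v : ℕ} (hev : e ≤ v)
    (htail : ∀ u ∈ Set.Ico e v, ¬ HasLongTail x K e u v) :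
    pathLength x e v ≤ 2 * (M * (K + 2)) * dist (x e) (x v) := by
  induction hn : v - e using Nat.strong_induction_on generalizing e with
  | _ n ih =>
    rcases (dist_nonneg (x := x e) (y := x v)).eq_or_lt' with h0 | hpos
    · rw [hx.pathLength_eq_zero h0, h0, mul_zero]
    obtain ⟨y, ⟨hey, hyv⟩, hhalf, hshell⟩ := exists_first_mem_Icc
      (P := fun y => dist (x y) (x v) ≤ dist (x e) (x v) / 2) hev (by rw [dist_self]; positivity)
    have hne : e ≠ y := by
      rintro rfl
      linarith
    have hfirst := pathLength_le_on_shell hx hM hK hey hyv htail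
      fun i hi => not_le.1 (hshell i hi)
    have hrest := ih (v - y) (by omega) hyv
      (fun u hu hu_tail => htail u ⟨hey.trans hu.1, hu.2⟩ (hu_tail.anti hey)) rfl
    calc pathLength x e v = pathLength x e y + pathLength x y v := (pathLength_add x hey hyv).symm
      _ ≤ M * (K + 2) * dist (x e) (x v) + 2 * (M * (K + 2)) * (dist (x e) (x v) / 2) :=
          add_le_add hfirst (hrest.trans (mul_le_mul_of_nonneg_left hhalf (by positivity)))
      _ = 2 * (M * (K + 2)) * dist (x e) (x v) := by ring

theorem pathLength_le_of_antitoneOn (hx : IsSelfContracted x)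
    (hM : IsPackingBound (Set.range x) (1 / 20) M) (hK : 0 ≤ K) {A : ℝ} (hA : 2 * (M * (K + 2)) ≤ A)
    {Φ : ℕ → ℝ} {a b : ℕ} (hΦ : AntitoneOn Φ (Set.Icc a b))
    (hdrop : ∀ u v, u < v → v ≤ b → HasLongTail x K a u v →
      dist (x u) (x v) ≤ Φ u - Φ v) {v : ℕ} (hav : a ≤ v) (hvb : v ≤ b) :
    pathLength x a v ≤ (2 + A) * (Φ a - Φ v) + A * (2 * dist (x a) (x b)) := by
  have hA0 : 0 ≤ A := le_trans (by positivity) hA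
  induction v using Nat.strong_induction_on with
  | _ v ih =>
    by_cases htail : ∃ u ∈ Set.Ico a v, HasLongTail x K a u v
    · obtain ⟨u, ⟨hau, huv⟩, hu_tail, hlast⟩ := exists_last_mem_Ico htail
      have hbefore := ih u huv hau (huv.le.trans hvb)
      have hstep : dist (x u) (x (u + 1)) ≤ 2 * dist (x u) (x v) :=
        hx.dist_le_two_mul ⟨le_rfl, huv.le⟩ ⟨u.le_succ, huv⟩
      have hafter : pathLength x (u + 1) v ≤ A * dist (x u) (x v) := by
        have hcalm := pathLength_le_of_forall_not_hasLongTail hx hM hK (Nat.succ_le_of_lt huv)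
          fun w hw hw_tail => hlast w hw (hw_tail.anti (hau.trans u.le_succ))
        exact hcalm.trans (mul_le_mul hA (hx u.le_succ huv) dist_nonneg hA0)
      have hpotential : (2 + A) * dist (x u) (x v) ≤ (2 + A) * (Φ u - Φ v) :=
        mul_le_mul_of_nonneg_left (hdrop u v huv hvb hu_tail) (by positivity)
      rw [← pathLength_add x hau huv.le, pathLength_eq_dist_add x huv]
      linarith
    · push Not at htail
      have hcalm := pathLength_le_of_forall_not_hasLongTail hx hM hK hav htail
      have hchord : 2 * (M * (K + 2)) * dist (x a) (x v) ≤ A * (2 * dist (x a) (x b)) :=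
        mul_le_mul hA (hx.dist_le_two_mul ⟨le_rfl, hav.trans hvb⟩ ⟨hav, hvb⟩) dist_nonneg hA0
      have hΦv : 0 ≤ (2 + A) * (Φ a - Φ v) := mul_nonneg (by positivity)
        (sub_nonneg.2 (hΦ ⟨le_rfl, hav.trans hvb⟩ ⟨hav, hvb⟩ hav))
      linarith

theorem exists_transversal_hasLongTail (hx : IsSelfContracted x)
    (hM : IsPackingBound (Set.range x) (1 / 20) M) (hK : 0 ≤ K) {A : ℝ} (hA : 2 * (M * (K + 2)) ≤ A)
    {a b : ℕ} (hab : a ≤ b) {F : Finset ℕ} (hF : ∀ k ∈ F, b ≤ k)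
    (hlong : ((2 + A) * (4 * F.card) + A * 2) * dist (x a) (x b) < pathLength x a b) :
    ∃ u v, u < v ∧ v ≤ b ∧ HasLongTail x K a u v ∧
      ∀ k ∈ F, dist (x u) (x k) - dist (x v) (x k) < dist (x u) (x v) / 4 := by
  by_contra! hnot
  let Φ : ℕ → ℝ := fun i => 4 * ∑ k ∈ F, dist (x i) (x k)
  have hΦ_sub : ∀ u v, Φ u - Φ v = 4 * ∑ k ∈ F, (dist (x u) (x k) - dist (x v) (x k)) :=
    fun u v => by rw [Finset.sum_sub_distrib, mul_sub]
  have hterm : ∀ {u v k}, u ≤ v → v ≤ b → k ∈ F → 0 ≤ dist (x u) (x k) - dist (x v) (x k) :=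
    fun huv hvb hk => sub_nonneg.2 (hx huv (hvb.trans (hF _ hk)))
  have hΦ : AntitoneOn Φ (Set.Icc a b) := fun u _ v hv huv => by
    have hsum := Finset.sum_nonneg fun k hk => hterm huv hv.2 hk
    linarith [hΦ_sub u v]
  have hdrop : ∀ u v, u < v → v ≤ b → HasLongTail x K a u v →
      dist (x u) (x v) ≤ Φ u - Φ v := fun u v huv hvb htail => by
    obtain ⟨k, hk, hkdrop⟩ := hnot u v huv hvb htail
    have hsingle := Finset.single_le_sum
      (f := fun k => dist (x u) (x k) - dist (x v) (x k)) (fun k hk => hterm huv.le hvb hk) hk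
    linarith [hΦ_sub u v]
  have htotal : Φ a - Φ b ≤ 4 * F.card * dist (x a) (x b) := by
    have hsum : ∑ k ∈ F, (dist (x a) (x k) - dist (x b) (x k)) ≤ F.card • dist (x a) (x b) :=
      Finset.sum_le_card_nsmul _ _ _ fun k _ => by linarith [dist_triangle (x a) (x b) (x k)]
    rw [nsmul_eq_mul] at hsum
    linarith [hΦ_sub a b]
  have hlen := pathLength_le_of_antitoneOn hx hM hK hA hΦ hdrop hab le_rfl
  have hA0 : 0 ≤ 2 + A := by linarith [show 0 ≤ 2 * (M * (K + 2)) by positivity]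
  linarith [mul_le_mul_of_nonneg_left htotal hA0]

end LongTail

section Spread

variable {X : Type*} [MetricSpace X] {x : ℕ → X}

/-- The later points `x k`, `k ∈ F`, are far from the piece `x t, …, x u` of a chain, and are seen
from each of its points under pairwise comparison angles at least `π / 3`. -/
structure IsSpread (x : ℕ → X) (t u : ℕ) (F : Finset ℕ) : Prop where
  lt : ∀ k ∈ F, u < k
  pos : ∀ p ∈ Set.Icc t u, ∀ k ∈ F, 0 < dist (x p) (x k)
  far : ∀ p ∈ Set.Icc t u, ∀ k ∈ F, 9 * dist (x t) (x u) ≤ dist (x p) (x k)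
  angle : ∀ p ∈ Set.Icc t u,
    (F : Set ℕ).Pairwise fun j k => Real.pi / 3 ≤ compAngle (x p) (x j) (x k)

theorem isSpread_empty (x : ℕ → X) (t u : ℕ) : IsSpread x t u ∅ where
  lt _ hk := absurd hk (Finset.notMem_empty _)
  pos _ _ _ hk := absurd hk (Finset.notMem_empty _)
  far _ _ _ hk := absurd hk (Finset.notMem_empty _)
  angle _ _ := by simp only [Finset.coe_empty, Set.pairwise_empty]

theorem pi_div_three_le_compAngle {p v k : X} (hv : 0 < dist p v) (hk : 0 < dist p k)
    (hnear : dist p v ≤ 2 / 9 * dist p k) (hle : dist v k ≤ dist p k)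
    (hdrop : dist p k - dist v k ≤ 7 / 18 * dist p v) :
    Real.pi / 3 ≤ compAngle p v k := by
  rw [dist_comm p v, dist_comm p k] at *
  rw [← not_lt, compAngle_lt_iff (by positivity) (by linarith [Real.pi_pos]) hv hk, not_lt,
    Real.cos_pi_div_three]
  have hfactor : (dist k p - dist v k) * (dist k p + dist v k) ≤
      7 / 18 * dist v p * (2 * dist k p) :=
    mul_le_mul hdrop (by linarith) (by positivity) (by positivity)
  have hsq : dist v p * dist v p ≤ dist v p * (2 / 9 * dist k p) :=
    mul_le_mul_of_nonneg_left hnear hv.le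
  linarith

theorem IsSpread.insert {t₀ u₀ t u v : ℕ} {F : Finset ℕ} (h : IsSpread x t₀ u₀ F)
    (hx : IsSelfContracted x) (ht : t₀ ≤ t) (htu : t ≤ u) (huv : u < v) (hv : v ≤ u₀)
    (hpos : 0 < dist (x u) (x v)) (hsmall : dist (x t) (x u) ≤ dist (x u) (x v) / 10)
    (htrans : ∀ k ∈ F, dist (x u) (x k) - dist (x v) (x k) < dist (x u) (x v) / 4) :
    IsSpread x t u (insert v F) := by
  have hpiece : ∀ p ∈ Set.Icc t u, p ∈ Set.Icc t₀ u₀ := fun p hp =>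
    ⟨ht.trans hp.1, hp.2.trans (huv.le.trans hv)⟩
  have hv₀ : v ∈ Set.Icc t₀ u₀ := ⟨(ht.trans htu).trans huv.le, hv⟩
  have hpu : ∀ p ∈ Set.Icc t u, dist (x p) (x u) ≤ dist (x u) (x v) / 10 := fun p hp =>
    (hx hp.1 hp.2).trans hsmall
  have hpv : ∀ p ∈ Set.Icc t u, 9 / 10 * dist (x u) (x v) ≤ dist (x p) (x v) := fun p hp => by
    linarith [hpu p hp, dist_triangle_left (x u) (x v) (x p)]
  have hnew : ∀ p ∈ Set.Icc t u, ∀ k ∈ F, Real.pi / 3 ≤ compAngle (x p) (x v) (x k) := by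
    intro p hp k hk
    refine pi_div_three_le_compAngle (by linarith [hpv p hp]) (h.pos p (hpiece p hp) k hk) ?_
      (hx (hp.2.trans huv.le) (hv.trans (h.lt k hk).le)) ?_
    · linarith [hx.dist_le_two_mul (hpiece p hp) hv₀, h.far p (hpiece p hp) k hk]
    · linarith [htrans k hk, dist_triangle (x p) (x u) (x k), hpu p hp, hpv p hp]
  refine ⟨fun k hk => ?_, fun p hp k hk => ?_, fun p hp k hk => ?_, fun p hp => ?_⟩
  · rcases Finset.mem_insert.1 hk with rfl | hk
    exacts [huv, (huv.trans_le hv).trans (h.lt k hk)]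
  · rcases Finset.mem_insert.1 hk with rfl | hk
    exacts [by linarith [hpv p hp], h.pos p (hpiece p hp) k hk]
  · rcases Finset.mem_insert.1 hk with rfl | hk
    · linarith [hpv p hp]
    · linarith [h.far p (hpiece p hp) k hk,
        hx.dist_le_two_mul (hpiece u ⟨htu, le_rfl⟩) hv₀]
  · rw [Finset.coe_insert]
    exact (h.angle p (hpiece p hp)).insert fun k hk _ =>
      ⟨hnew p hp k hk, by rw [compAngle_comm]; exact hnew p hp k hk⟩

theorem exists_isSpread (M m : ℕ) {K : ℝ} (hK : 0 ≤ K) :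
    ∃ K' : ℝ, 0 ≤ K' ∧ ∀ x : ℕ → X, IsSelfContracted x →
      IsPackingBound (Set.range x) (1 / 20) M → ∀ a b, a ≤ b →
      K' * dist (x a) (x b) < pathLength x a b →
      ∃ t u F, t ≤ u ∧ F.card = m ∧ IsSpread x t u F ∧
        K * dist (x t) (x u) < pathLength x t u := by
  induction m generalizing K with
  | zero =>
    exact ⟨K, hK, fun x _ _ a b hab hlong =>
      ⟨a, b, ∅, hab, Finset.card_empty, isSpread_empty x a b, hlong⟩⟩
  | succ m ih =>
    let A : ℝ := 2 * (M * (K + 2))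
    obtain ⟨K', hK', hspread⟩ := ih (show 0 ≤ (2 + A) * (4 * m) + A * 2 by positivity)
    refine ⟨K', hK', fun x hx hM a b hab hlong => ?_⟩
    obtain ⟨t₀, u₀, F, htu₀, rfl, hF, hlong₀⟩ := hspread x hx hM a b hab hlong
    obtain ⟨u, v, huv, hv, ⟨t, ht, htu, hsmall, hlong'⟩, htrans⟩ :=
      exists_transversal_hasLongTail hx hM hK le_rfl htu₀ (fun k hk => (hF.lt k hk).le) hlong₀
    have hpos : 0 < dist (x u) (x v) := by
      by_contra! h0
      have htu0 : dist (x t) (x u) = 0 := le_antisymm (by linarith) dist_nonneg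
      rw [hx.pathLength_eq_zero htu0, htu0, mul_zero] at hlong'
      exact lt_irrefl _ hlong'
    have hvF : v ∉ F := fun hvF => (hF.lt v hvF).not_ge hv
    exact ⟨t, u, insert v F, htu, Finset.card_insert_of_notMem hvF,
      hF.insert hx ht htu huv hv hpos hsmall htrans, hlong'⟩

theorem IsATBOn.exists_pathLength_le {ε : ℝ} {L : ℕ} {S : Set X} (hS : IsATBOn ε L S)
    (hε : ε < Real.pi / 3) :
    ∃ K : ℝ, 0 ≤ K ∧ ∀ x : ℕ → X, IsSelfContracted x → Set.range x ⊆ S → ∀ a b, a ≤ b →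
      pathLength x a b ≤ K * dist (x a) (x b) := by
  obtain ⟨M, hM⟩ := hS.exists_isPackingBound hε (show (0 : ℝ) < 1 / 20 by norm_num)
  obtain ⟨K, hK, hspread⟩ := exists_isSpread (X := X) M L le_rfl
  refine ⟨K, hK, fun x hx hxS a b hab => ?_⟩
  by_contra! hlong
  obtain ⟨t, u, F, htu, hcard, hF, -⟩ := hspread x hx (hM.mono hxS le_rfl) a b hab hlong
  have hu : u ∈ Set.Icc t u := ⟨htu, le_rfl⟩
  obtain ⟨i, hi, j, hj, hij, hangle⟩ := hS.exists_compAngle_lt (hxS (Set.mem_range_self u))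
    (fun k hk => ⟨hxS (Set.mem_range_self k), (dist_pos.1 (hF.pos u hu k hk)).symm⟩) hcard.ge
  linarith [hF.angle u hu hi hj hij]

end Spread

theorem rectifiable_of_semiGlobalATB_general {X : Type*} [MetricSpace X] {ε : ℝ}
    (hε : ε < Real.pi / 3) (hATB : SemiGlobalATB X ε) {γ : ℝ → X} {I : Set ℝ}
    (hbdd : Bornology.IsBounded (γ '' I)) (hsc : SelfContracted γ I) : Rectifiable γ I := by
  obtain ⟨L, hL⟩ := hATB.exists_isATBOn hbdd
  obtain ⟨K, hK, hlen⟩ := hL.exists_pathLength_le hε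
  refine rectifiable_of_pathLength_le (C := K * Metric.diam (γ '' I)) fun t k ht htI => ?_
  have himage : ∀ i, (γ ∘ t) i ∈ γ '' I := fun i => Set.mem_image_of_mem γ (htI i)
  calc pathLength (γ ∘ t) 0 k ≤ K * dist ((γ ∘ t) 0) ((γ ∘ t) k) :=
        hlen _ (hsc.comp_monotone ht htI) (Set.range_subset_iff.2 himage) 0 k k.zero_le
    _ ≤ K * Metric.diam (γ '' I) :=
        mul_le_mul_of_nonneg_left (Metric.dist_le_diam_of_mem hbdd (himage 0) (himage k)) hK

/-- In a semi-globally `ATB(ε)` metric space with `0 < ε < π/6`, every bounded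
self-contracted curve is rectifiable. -/
theorem rectifiable_of_semiGlobalATB
    {X : Type*} [MetricSpace X] (ε : ℝ) (hε0 : 0 < ε) (hε : ε < Real.pi / 6)
    (hATB : SemiGlobalATB X ε)
    (γ : ℝ → X) (I : Set ℝ) (hI : I.OrdConnected)
    (hbdd : Bornology.IsBounded (γ '' I))
    (hsc : SelfContracted γ I) :
    Rectifiable γ I :=
  rectifiable_of_semiGlobalATB_general (hε.trans (by linarith [Real.pi_pos])) hATB hbdd hsc
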